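/- arXiv:2010.04662 — 2 statements merged into one kernel-verified Lean document; each statement's English description precedes it below -/
import Mathlib

section
/- Let K be a field, let M be a K[x]-submodule of K[x]^{1×n} which is free of rank m, let s ∈ ℤ^n, and let t ∈ ℤ^m be the s-row degree of some s-reduced basis of M, assumed to be nondecreasing. Let B ∈ K[x]^{m×n} be a matrix of rank m all of whose rows lie in M, and let d ∈ ℤ^m be the s-row degree of B sorted in nondecreasing order. If d ≤ t entrywise, then B is a basis of M, B is in s-reduced form, and d = t. -/
open Polynomial Matrix

/-- The degree of a polynomial, viewed in `ℤ ∪ {-∞}`. -/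
noncomputable def degZ {K : Type*} [Field K] (p : K[X]) : WithBot ℤ :=
  p.degree.map fun a : ℕ => (a : ℤ)

/-- The `s`-row degree of a (row) vector of polynomials. -/
noncomputable def rdegRow {K : Type*} [Field K] {ν : Type*} [Fintype ν]
    (s : ν → ℤ) (v : ν → K[X]) : WithBot ℤ :=
  Finset.univ.sup fun j => degZ (v j) + (s j : WithBot ℤ)

/-- The `s`-row degree of a polynomial matrix. -/
noncomputable def rdeg {K : Type*} [Field K] {ι ν : Type*} [Fintype ν]
    (s : ν → ℤ) (P : Matrix ι ν K[X]) : ι → WithBot ℤ :=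
  fun i => rdegRow s (P i)

/-- The `t`-column degree of a polynomial matrix. -/
noncomputable def cdeg {K : Type*} [Field K] {ι ν : Type*} [Fintype ι]
    (t : ι → ℤ) (P : Matrix ι ν K[X]) : ν → WithBot ℤ :=
  fun j => Finset.univ.sup fun i => degZ (P i j) + (t i : WithBot ℤ)

/-- Coefficient of integer degree `d` of a polynomial (0 if `d < 0`). -/
noncomputable def coeffZ {K : Type*} [Field K] (p : K[X]) (d : ℤ) : K :=
  if 0 ≤ d then p.coeff d.toNat else 0

/-- The `s`-leading matrix of a polynomial matrix. -/
noncomputable def lm {K : Type*} [Field K] {ι ν : Type*} [Fintype ν]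
    (s : ν → ℤ) (P : Matrix ι ν K[X]) : Matrix ι ν K :=
  Matrix.of fun i j =>
    (rdeg s P i).recBotCoe 0 fun t => coeffZ (P i j) (t - s j)

/-- `P` is in `s`-reduced form: its `s`-leading matrix has full row rank,
i.e. its rows are linearly independent over `K`. -/
def IsReducedForm {K : Type*} [Field K] {ι ν : Type*} [Fintype ν]
    (s : ν → ℤ) (P : Matrix ι ν K[X]) : Prop :=
  LinearIndependent K fun i => lm s P i

open Classical in
/-- The `s`-pivot index of a row vector: the largest column index where the
`s`-row degree is attained (with a nonzero entry); `⊥` for the zero row. -/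
noncomputable def piv {K : Type*} [Field K] {ν : Type*} [Fintype ν] [LinearOrder ν]
    (s : ν → ℤ) (v : ν → K[X]) : WithBot ν :=
  (Finset.univ.filter fun j => v j ≠ 0 ∧ degZ (v j) + (s j : WithBot ℤ) = rdegRow s v).max

/-- The `s`-pivot degree of a row vector (junk value `0` for the zero row). -/
noncomputable def pivDeg {K : Type*} [Field K] {ν : Type*} [Fintype ν] [LinearOrder ν]
    (s : ν → ℤ) (v : ν → K[X]) : ℕ :=
  ((piv s v).map fun j => (v j).natDegree).unbotD 0

/-- `P` is in `s`-weak Popov form: no zero row and strictly increasing `s`-pivot indices. -/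
def IsWeakPopov {K : Type*} [Field K] {ι ν : Type*} [Fintype ν] [LinearOrder ν] [Preorder ι]
    (s : ν → ℤ) (P : Matrix ι ν K[X]) : Prop :=
  (∀ i, piv s (P i) ≠ ⊥) ∧ StrictMono fun i => piv s (P i)

/-- `P` is in `s`-unordered weak Popov form: no zero row and pairwise distinct
`s`-pivot indices. -/
def IsUWeakPopov {K : Type*} [Field K] {ι ν : Type*} [Fintype ν] [LinearOrder ν]
    (s : ν → ℤ) (P : Matrix ι ν K[X]) : Prop :=
  (∀ i, piv s (P i) ≠ ⊥) ∧ Function.Injective fun i => piv s (P i)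

/-- `P` is in `s`-Popov form: `s`-weak Popov, monic pivots, and each pivot entry
has degree strictly larger than the other entries of its column. -/
def IsPopov {K : Type*} [Field K] {ι ν : Type*} [Fintype ν] [LinearOrder ν] [Preorder ι]
    (s : ν → ℤ) (P : Matrix ι ν K[X]) : Prop :=
  IsWeakPopov s P ∧
    ∀ i (j : ν), piv s (P i) = (j : WithBot ν) →
      (P i j).Monic ∧ ∀ i', i' ≠ i → (P i' j).degree < (P i j).degree

/-- The row space of a polynomial matrix. -/
noncomputable def rowSpace {K : Type*} [Field K] {ι ν : Type*} (P : Matrix ι ν K[X]) :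
    Submodule K[X] (ν → K[X]) :=
  Submodule.span K[X] (Set.range fun i => P i)

/-- The rows of `B` form a basis of the module `M`. -/
def IsBasisOf {K : Type*} [Field K] {ι ν : Type*} (B : Matrix ι ν K[X])
    (M : Submodule K[X] (ν → K[X])) : Prop :=
  LinearIndependent K[X] (fun i => B i) ∧
    Submodule.span K[X] (Set.range fun i => B i) = M

/-- The left kernel of a polynomial matrix. -/
noncomputable def leftKernel {K : Type*} [Field K] {ι ν : Type*} [Fintype ι]
    (F : Matrix ι ν K[X]) : Submodule K[X] (ι → K[X]) :=
  LinearMap.ker F.vecMulLinear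

/-- `p` has degree at most the integer `a`. -/
def DB {K : Type*} [Field K] (p : K[X]) (a : ℤ) : Prop :=
  ∀ k : ℕ, a < k → p.coeff k = 0

theorem DB.zero_of_neg {K : Type*} [Field K] {p : K[X]} {a : ℤ} (h : DB p a) (ha : a < 0) :
    p = 0 := by
  ext k
  exact h k (by omega)

theorem DB.mono {K : Type*} [Field K] {p : K[X]} {a b : ℤ} (h : DB p a) (hab : a ≤ b) :
    DB p b := fun k hk => h k (by omega)

theorem DB.natDegree_le {K : Type*} [Field K] {p : K[X]} {a : ℕ} (h : DB p (a : ℤ)) :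
    p.natDegree ≤ a := by
  rw [Polynomial.natDegree_le_iff_coeff_eq_zero]
  intro k hk
  exact h k (by exact_mod_cast hk)

theorem DB.of_natDegree_le {K : Type*} [Field K] {p : K[X]} {a : ℤ}
    (h : (p.natDegree : ℤ) ≤ a) : DB p a := by
  intro k hk
  exact Polynomial.coeff_eq_zero_of_natDegree_lt (by omega)

theorem coeffZ_natCast {K : Type*} [Field K] (p : K[X]) (a : ℕ) :
    coeffZ p (a : ℤ) = p.coeff a := by
  simp [coeffZ]

theorem coeffZ_zero' {K : Type*} [Field K] (a : ℤ) : coeffZ (0 : K[X]) a = 0 := by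
  simp [coeffZ]

theorem DB.step {K : Type*} [Field K] {p : K[X]} {a : ℤ} (h : DB p (a + 1))
    (h0 : coeffZ p (a + 1) = 0) : DB p a := by
  intro k hk
  rcases eq_or_lt_of_le (show a + 1 ≤ k by omega) with h1 | h1
  · rwa [h1, coeffZ_natCast] at h0
  · exact h k h1

theorem DB.coeffZ_eq_zero {K : Type*} [Field K] {p : K[X]} {a b : ℤ} (h : DB p a)
    (hab : a < b) : coeffZ p b = 0 := by
  unfold coeffZ
  split_ifs with hb
  · exact h _ (by omega)
  · rfl

theorem DB.mul {K : Type*} [Field K] {p q : K[X]} {a b : ℤ} (hp : DB p a) (hq : DB q b) :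
    DB (p * q) (a + b) ∧ coeffZ (p * q) (a + b) = coeffZ p a * coeffZ q b := by
  by_cases ha : a < 0
  · obtain rfl := hp.zero_of_neg ha
    simp [coeffZ_zero', DB]
  by_cases hb : b < 0
  · obtain rfl := hq.zero_of_neg hb
    simp [coeffZ_zero', DB]
  lift a to ℕ using by omega
  lift b to ℕ using by omega
  refine ⟨DB.of_natDegree_le ?_, ?_⟩
  · exact_mod_cast Polynomial.natDegree_mul_le_of_le hp.natDegree_le hq.natDegree_le
  · rw [← Nat.cast_add, coeffZ_natCast, coeffZ_natCast, coeffZ_natCast]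
    exact Polynomial.coeff_mul_add_eq_of_natDegree_le hp.natDegree_le hq.natDegree_le

theorem DB.prod {K : Type*} [Field K] {ι : Type*} (S : Finset ι) {p : ι → K[X]} {a : ι → ℤ}
    (h : ∀ i, DB (p i) (a i)) :
    DB (∏ i ∈ S, p i) (∑ i ∈ S, a i) ∧
      coeffZ (∏ i ∈ S, p i) (∑ i ∈ S, a i) = ∏ i ∈ S, coeffZ (p i) (a i) := by
  classical
  induction S using Finset.induction_on with
  | empty =>
    refine ⟨DB.of_natDegree_le (by simp), by simp [coeffZ]⟩
  | insert i S hi ih =>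
    rw [Finset.prod_insert hi, Finset.sum_insert hi, Finset.prod_insert hi, ← ih.2]
    exact (h i).mul ih.1

theorem DB.sum {K : Type*} [Field K] {ι : Type*} (S : Finset ι) {p : ι → K[X]} {a : ℤ}
    (h : ∀ i, DB (p i) a) : DB (∑ i ∈ S, p i) a := by
  intro k hk
  rw [Polynomial.finsetSum_coeff]
  exact Finset.sum_eq_zero fun i _ => h i k hk

theorem coeffZ_sum {K : Type*} [Field K] {ι : Type*} (S : Finset ι) (p : ι → K[X]) (a : ℤ) :
    coeffZ (∑ i ∈ S, p i) a = ∑ i ∈ S, coeffZ (p i) a := by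
  unfold coeffZ
  split_ifs
  · rw [Polynomial.finsetSum_coeff]
  · simp

theorem DB.det {K : Type*} [Field K] {m : ℕ} (U : Matrix (Fin m) (Fin m) K[X])
    (e t : Fin m → ℤ) (h : ∀ i j, DB (U i j) (e i - t j)) :
    DB U.det (∑ i, e i - ∑ i, t i) ∧
      coeffZ U.det (∑ i, e i - ∑ i, t i) =
        (Matrix.of fun i j => coeffZ (U i j) (e i - t j)).det := by
  have key : ∀ π : Equiv.Perm (Fin m), ∑ i, (e (π i) - t i) = ∑ i, e i - ∑ i, t i := by
    intro π
    rw [Finset.sum_sub_distrib, Equiv.sum_comp π e]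
  have h2 : ∀ π : Equiv.Perm (Fin m),
      DB (((Equiv.Perm.sign π : ℤ) : K[X]) * ∏ i, U (π i) i) (∑ i, e i - ∑ i, t i) ∧
      coeffZ (((Equiv.Perm.sign π : ℤ) : K[X]) * ∏ i, U (π i) i) (∑ i, e i - ∑ i, t i) =
        ((Equiv.Perm.sign π : ℤ) : K) * ∏ i, coeffZ (U (π i) i) (e (π i) - t i) := by
    intro π
    have h3 := DB.prod (Finset.univ) (fun i => h (π i) i)
    rw [key] at h3
    have h4 : DB (((Equiv.Perm.sign π : ℤ) : K[X])) 0 := DB.of_natDegree_le (by simp)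
    have h5 := h4.mul h3.1
    rw [zero_add] at h5
    refine ⟨h5.1, ?_⟩
    rw [h5.2, h3.2]
    congr 1
    simp [coeffZ]
  rw [Matrix.det_apply', Matrix.det_apply']
  refine ⟨DB.sum _ fun π => (h2 π).1, ?_⟩
  rw [coeffZ_sum]
  exact Finset.sum_congr rfl fun π _ => (h2 π).2

theorem DB_iff {K : Type*} [Field K] (p : K[X]) (a : ℤ) :
    degZ p ≤ (a : WithBot ℤ) ↔ DB p a := by
  unfold degZ
  by_cases hp : p = 0
  · subst hp
    simp [DB]
  rw [Polynomial.degree_eq_natDegree hp]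
  change (((p.natDegree : ℤ)) : WithBot ℤ) ≤ _ ↔ _
  rw [WithBot.coe_le_coe]
  refine ⟨DB.of_natDegree_le, fun h => ?_⟩
  by_contra hlt
  exact hp (Polynomial.leadingCoeff_eq_zero.1 (h p.natDegree (by omega)))

theorem rdegRow_le_iff {K : Type*} [Field K] {n : ℕ} (s : Fin n → ℤ) (v : Fin n → K[X])
    (c : ℤ) : rdegRow s v ≤ (c : WithBot ℤ) ↔ ∀ j, DB (v j) (c - s j) := by
  unfold rdegRow
  rw [Finset.sup_le_iff]
  simp only [Finset.mem_univ, true_imp_iff, ← DB_iff]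
  refine forall_congr' fun j => ?_
  cases h : degZ (v j) with
  | bot => simp
  | coe x =>
    rw [← WithBot.coe_add, WithBot.coe_le_coe, WithBot.coe_le_coe]
    omega

theorem lm_apply' {K : Type*} [Field K] {m n : ℕ} (s : Fin n → ℤ)
    (P : Matrix (Fin m) (Fin n) K[X]) (i : Fin m) (j : Fin n) (c : ℤ)
    (h : rdeg s P i = (c : WithBot ℤ)) : lm s P i j = coeffZ (P i j) (c - s j) := by
  simp [lm, h]

theorem combo_coeffZ {K : Type*} [Field K] {m n : ℕ} (s : Fin n → ℤ)
    (P : Matrix (Fin m) (Fin n) K[X]) (t : Fin m → ℤ)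
    (ht : ∀ i, rdeg s P i = (t i : WithBot ℤ)) (u : Fin m → K[X]) (c : ℤ)
    (hu : ∀ i, DB (u i) (c - t i)) (j : Fin n) :
    coeffZ ((u ᵥ* P) j) (c - s j) = ((fun i => coeffZ (u i) (c - t i)) ᵥ* lm s P) j := by
  simp only [Matrix.vecMul, dotProduct]
  rw [coeffZ_sum]
  refine Finset.sum_congr rfl fun i _ => ?_
  rw [lm_apply' s P i j _ (ht i)]
  have h1 := ((rdegRow_le_iff s (P i) (t i)).1 (ht i).le) j
  have h2 := ((hu i).mul h1).2
  rwa [show c - t i + (t i - s j) = c - s j by ring] at h2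

theorem predictable {K : Type*} [Field K] {m n : ℕ} (s : Fin n → ℤ)
    (P : Matrix (Fin m) (Fin n) K[X]) (t : Fin m → ℤ) (hred : IsReducedForm s P)
    (ht : ∀ i, rdeg s P i = (t i : WithBot ℤ)) (u : Fin m → K[X]) (c : ℤ)
    (hv : ∀ j, DB ((u ᵥ* P) j) (c - s j)) : ∀ i, DB (u i) (c - t i) := by
  have inj : Function.Injective fun w => w ᵥ* lm s P := Matrix.vecMul_injective_iff.2 hred
  have main : ∀ k : ℕ, (∀ i, DB (u i) (c + k - t i)) → ∀ i, DB (u i) (c - t i) := by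
    intro k
    induction k with
    | zero => intro h; simpa using h
    | succ k ih =>
      intro h
      apply ih
      have hz : (fun i => coeffZ (u i) (c + (k + 1 : ℕ) - t i)) = 0 := by
        apply inj
        ext j
        have := combo_coeffZ s P t ht u (c + (k + 1 : ℕ)) h j
        simp only [Matrix.zero_vecMul, Pi.zero_apply]
        rw [← this]
        exact (hv j).coeffZ_eq_zero (by push_cast; omega)
      intro i
      have e : c + ((k + 1 : ℕ) : ℤ) - t i = c + k - t i + 1 := by push_cast; ring
      have h1 := h i
      have h2 := congrFun hz i
      simp only [Pi.zero_apply] at h2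
      rw [e] at h1 h2
      exact h1.step h2
  apply main (∑ i, ((u i).natDegree + (t i - c).toNat))
  intro i
  apply DB.of_natDegree_le
  have := Finset.single_le_sum (f := fun i => (u i).natDegree + (t i - c).toNat)
    (fun i _ => Nat.zero_le _) (Finset.mem_univ i)
  omega

theorem det_ne_zero_of_rank {K : Type*} [Field K] {m n : ℕ} (U : Matrix (Fin m) (Fin m) K[X])
    (P : Matrix (Fin m) (Fin n) K[X]) (h : (U * P).rank = m) : U.det ≠ 0 := by
  intro h0
  obtain ⟨w, hw, hwU⟩ := Matrix.exists_vecMul_eq_zero_iff.2 h0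
  let φ : (Fin m → K[X]) →ₗ[K[X]] K[X] := dotProductBilin K[X] K[X] w
  have hφ : ∀ v, φ v = w ⬝ᵥ v := fun v => rfl
  have h1 : LinearMap.range (U * P).mulVecLin ≤ LinearMap.ker φ := by
    rintro _ ⟨x, rfl⟩
    rw [LinearMap.mem_ker, hφ, Matrix.mulVecLin_apply, Matrix.dotProduct_mulVec,
      ← Matrix.vecMul_vecMul, hwU]
    simp
  have h2 := Submodule.finrank_mono h1
  have h3 := Submodule.finrank_quotient_add_finrank (LinearMap.ker φ)
  rw [φ.quotKerEquivRange.finrank_eq] at h3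
  have h4 : Module.finrank K[X] (LinearMap.range φ) ≠ 0 := by
    intro h5
    rw [Submodule.finrank_eq_zero, LinearMap.range_eq_bot] at h5
    apply hw
    ext1 i
    have := LinearMap.congr_fun h5 (Pi.single i 1)
    rw [hφ] at this
    simpa using this
  rw [Module.finrank_fin_fun] at h3
  rw [Matrix.rank] at h
  omega

/-- minimality implies basis: if a rank-`m` submodule `M` of
`K[x]^{1×n}` has an `s`-reduced basis of nondecreasing `s`-row degree `t`, and
`B` is a rank-`m` matrix with rows in `M` whose sorted `s`-row degree `d`
satisfies `d ≤ t`, then `B` is an `s`-reduced basis of `M` and `d = t`. -/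
theorem minimality_implies_basis {K : Type*} [Field K] {m n : ℕ}
    (M : Submodule K[X] (Fin n → K[X])) (s : Fin n → ℤ)
    (t : Fin m → ℤ) (htmono : Monotone t)
    (B₀ : Matrix (Fin m) (Fin n) K[X])
    (hB₀ : IsBasisOf B₀ M) (hB₀red : IsReducedForm s B₀)
    (hB₀deg : ∀ i, rdeg s B₀ i = ((t i : ℤ) : WithBot ℤ))
    (B : Matrix (Fin m) (Fin n) K[X])
    (hrank : B.rank = m)
    (hrows : ∀ i, B i ∈ M)
    (d : Fin m → ℤ) (hdmono : Monotone d)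
    (σ : Equiv.Perm (Fin m)) (hσ : ∀ i, rdeg s B (σ i) = ((d i : ℤ) : WithBot ℤ))
    (hdt : ∀ i, d i ≤ t i) :
    IsBasisOf B M ∧ IsReducedForm s B ∧ d = t := by
  obtain ⟨hli, hspan⟩ := hB₀
  have hU : ∀ i, ∃ u : Fin m → K[X], u ᵥ* B₀ = B i := by
    intro i
    have h := hrows i
    rw [← hspan, Submodule.mem_span_range_iff_exists_fun] at h
    obtain ⟨u, hu⟩ := h
    refine ⟨u, ?_⟩
    rw [Matrix.vecMul_eq_sum]
    exact hu
  choose U hU using hU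
  have hUB : (Matrix.of U) * B₀ = B := by
    ext i j
    rw [← hU i]
    rfl
  set e : Fin m → ℤ := fun i => d (σ.symm i) with he
  have hBe : ∀ i, rdeg s B i = (e i : WithBot ℤ) := by
    intro i
    have := hσ (σ.symm i)
    rwa [Equiv.apply_symm_apply] at this
  have hDB : ∀ i j, DB (U i j) (e i - t j) := by
    intro i
    apply predictable s B₀ t hB₀red hB₀deg
    rw [hU i]
    exact (rdegRow_le_iff s (B i) (e i)).1 (hBe i).le
  have hdet : (Matrix.of U).det ≠ 0 := by
    apply det_ne_zero_of_rank _ B₀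
    rw [hUB, hrank]
  obtain ⟨hD1, hD2⟩ := DB.det (Matrix.of U) e t hDB
  have hsum : ∑ i, e i = ∑ i, d i := Equiv.sum_comp σ.symm d
  have hge : 0 ≤ ∑ i, e i - ∑ i, t i := by
    by_contra hlt
    exact hdet (hD1.zero_of_neg (by omega))
  have hle : ∑ i, d i ≤ ∑ i, t i := Finset.sum_le_sum fun i _ => hdt i
  have hdt' : d = t := by
    ext i
    exact (Finset.sum_eq_sum_iff_of_le fun i _ => hdt i).1 (by omega) i (Finset.mem_univ i)
  have hz : ∑ i, e i - ∑ i, t i = 0 := by omega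
  rw [hz] at hD1 hD2
  have hC : (Matrix.of U).det = C ((Matrix.of U).det.coeff 0) :=
    Polynomial.eq_C_of_natDegree_le_zero (DB.natDegree_le (a := 0) (by simpa using hD1))
  have hc0 : (Matrix.of U).det.coeff 0 ≠ 0 := by
    intro h
    rw [h, C_0] at hC
    exact hdet hC
  have hunit : IsUnit (Matrix.of U).det := by
    rw [hC]
    exact Polynomial.isUnit_C.2 hc0.isUnit
  have hL : IsUnit (Matrix.of fun i j => coeffZ (U i j) (e i - t j)).det := by
    have : coeffZ (Matrix.of U).det 0 = (Matrix.of U).det.coeff 0 := by simp [coeffZ]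
    rw [this] at hD2
    rw [isUnit_iff_ne_zero]
    intro h
    exact hc0 (hD2.trans h)
  have hlm : (Matrix.of fun i j => coeffZ (U i j) (e i - t j)) * lm s B₀ = lm s B := by
    ext i j
    rw [lm_apply' s B i j _ (hBe i), ← hU i, combo_coeffZ s B₀ t hB₀deg (U i) (e i) (hDB i) j]
    rfl
  refine ⟨⟨?_, le_antisymm ?_ ?_⟩, ?_, hdt'⟩
  · have h1 : LinearIndependent K[X] B.row := by
      rw [← Matrix.vecMul_injective_iff, ← hUB]
      have h2 : Function.Injective fun w => w ᵥ* B₀ := Matrix.vecMul_injective_iff.2 hli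
      have h3 := Matrix.vecMul_injective_of_isUnit ((Matrix.isUnit_iff_isUnit_det _).2 hunit)
      intro x y hxy
      simp only [← Matrix.vecMul_vecMul] at hxy
      exact h3 (h2 hxy)
    exact h1
  · rw [Submodule.span_le]
    rintro _ ⟨i, rfl⟩
    exact hrows i
  · rw [← hspan, Submodule.span_le]
    rintro _ ⟨i, rfl⟩
    have h1 : B₀ = (Matrix.of U)⁻¹ * B := by
      rw [← hUB, Matrix.nonsing_inv_mul_cancel_left _ _ hunit]
    have h2 : B₀ i = ∑ k, (Matrix.of U)⁻¹ i k • B k := by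
      conv_lhs => rw [h1]
      ext1 j
      simp [Matrix.mul_apply]
    change B₀ i ∈ _
    rw [h2]
    exact Submodule.sum_mem _ fun k _ => Submodule.smul_mem _ _ (Submodule.subset_span ⟨k, rfl⟩)
  · have h1 : LinearIndependent K (lm s B).row := by
      rw [← Matrix.vecMul_injective_iff, ← hlm]
      have h2 : Function.Injective fun w => w ᵥ* lm s B₀ :=
        Matrix.vecMul_injective_iff.2 hB₀red
      have h3 := Matrix.vecMul_injective_of_isUnit ((Matrix.isUnit_iff_isUnit_det _).2 hL)
      intro x y hxy
      simp only [← Matrix.vecMul_vecMul] at hxy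
      exact h3 (h2 hxy)
    exact h1
end

section
/- Let K be a field, t ∈ ℤ^n, let F ∈ K[x]^{n×n} be in t-weak Popov form, and let u = rdeg_t(F) ∈ ℤ^n. Let G ∈ K[x]^{m×n} and v ∈ ℤ^m with v ≥ rdeg_t(G) entrywise. Let [K1 K2] ∈ K[x]^{m×(n+m)} be a basis of the left kernel of the stacked matrix [F; G] ∈ K[x]^{(n+m)×n} which is in (u,v)-weak Popov form, where K1 has n columns and K2 has m columns. Then every (u,v)-pivot index of [K1 K2] is greater than n (i.e., all (u,v)-pivot entries of [K1 K2] lie in K2), and K2 is in v-weak Popov form. -/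
open Polynomial Matrix

theorem piv_iff {K : Type*} [Field K] {ν : Type*} [Fintype ν] [LinearOrder ν]
    (s : ν → ℤ) (v : ν → K[X]) (j : ν) :
    piv s v = (j : WithBot ν) ↔ v j ≠ 0 ∧
      (∀ k, degZ (v k) + (s k : WithBot ℤ) ≤ degZ (v j) + (s j : WithBot ℤ)) ∧
      (∀ k, j < k → degZ (v k) + (s k : WithBot ℤ) < degZ (v j) + (s j : WithBot ℤ)) := by
  classical
  have hle : ∀ k, degZ (v k) + (s k : WithBot ℤ) ≤ rdegRow s v := fun k =>
    Finset.le_sup (f := fun j => degZ (v j) + (s j : WithBot ℤ)) (Finset.mem_univ k)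
  constructor
  · intro h
    have h1 := Finset.mem_of_max h
    simp only [Finset.mem_filter, Finset.mem_univ, true_and] at h1
    refine ⟨h1.1, fun k => h1.2 ▸ hle k, fun k hk => ?_⟩
    rw [h1.2]
    refine lt_of_le_of_ne (hle k) fun he => ?_
    have hvk : v k ≠ 0 := by
      intro h0
      rw [← h1.2, h0] at he
      have hb : degZ (0 : K[X]) = ⊥ := by simp [degZ]
      rw [hb, WithBot.bot_add] at he
      have := h1.1
      rw [eq_comm, WithBot.add_eq_bot] at he
      rcases he with he | he
      · simp [degZ] at he
        exact this he
      · exact absurd he (WithBot.coe_ne_bot)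
    have h3 := Finset.le_max_of_eq (a := k) (b := j) (by simp [hvk, he]) h
    exact absurd hk (not_lt.mpr h3)
  · rintro ⟨h0, h1, h2⟩
    have hr : rdegRow s v = degZ (v j) + (s j : WithBot ℤ) :=
      le_antisymm (Finset.sup_le fun k _ => h1 k) (hle j)
    unfold piv
    rw [hr]
    apply le_antisymm
    · refine Finset.max_le fun k hk => ?_
      simp only [Finset.mem_filter, Finset.mem_univ, true_and] at hk
      rw [WithBot.coe_le_coe]
      by_contra hlt
      exact absurd hk.2 (h2 k (not_le.mp hlt)).ne
    · exact Finset.le_max (by simp [h0])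

theorem degZ_mul' {K : Type*} [Field K] (a b : K[X]) : degZ (a * b) = degZ a + degZ b := by
  by_cases ha : a = 0
  · simp [ha, degZ]
  by_cases hb : b = 0
  · simp [hb, degZ]
  simp only [degZ, degree_mul]
  rw [degree_eq_natDegree ha, degree_eq_natDegree hb, ← WithBot.coe_natCast,
    ← WithBot.coe_natCast, ← WithBot.coe_add]
  simp only [WithBot.map_coe]
  rw [← WithBot.coe_add]
  simp

theorem degZ_mono {K : Type*} [Field K] {a b : K[X]} (h : a.degree ≤ b.degree) :
    degZ a ≤ degZ b := by
  have : Monotone (fun a : ℕ => (a : ℤ)) := Nat.mono_cast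
  exact this.withBot_map h

theorem degZ_add_lt {K : Type*} [Field K] {a b : K[X]} {s c : WithBot ℤ}
    (ha : degZ a + s < c) (hb : degZ b + s < c) : degZ (a + b) + s < c := by
  rcases le_max_iff.mp (degree_add_le a b) with h | h
  · exact lt_of_le_of_lt (by gcongr; exact degZ_mono h) ha
  · exact lt_of_le_of_lt (by gcongr; exact degZ_mono h) hb

theorem degZ_zero {K : Type*} [Field K] : degZ (0 : K[X]) = ⊥ := by simp [degZ]

theorem degZ_coe {K : Type*} [Field K] {a : K[X]} (ha : a ≠ 0) :
    degZ a = ((a.natDegree : ℤ) : WithBot ℤ) := by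
  simp only [degZ]
  rw [degree_eq_natDegree ha, ← WithBot.coe_natCast]
  rfl

theorem degZ_sum_lt {K : Type*} [Field K] {ι : Type*} (S : Finset ι) (f : ι → K[X])
    {s c : WithBot ℤ} (hc : ⊥ < c) (h : ∀ i ∈ S, degZ (f i) + s < c) :
    degZ (∑ i ∈ S, f i) + s < c := by
  classical
  induction S using Finset.induction_on with
  | empty => simpa [degZ_zero] using hc
  | insert a S ha ih =>
    rw [Finset.sum_insert ha]
    exact degZ_add_lt (h _ (by simp)) (ih fun i hi => h i (by simp [hi]))

/-- Key degree bound for one product. -/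
theorem prod_lt {K : Type*} [Field K] {a b : K[X]} {s t d : ℤ}
    (h : (degZ a + (s : WithBot ℤ) < d ∧ degZ b + (t : WithBot ℤ) ≤ s) ∨
      (degZ a + (s : WithBot ℤ) ≤ d ∧ degZ b + (t : WithBot ℤ) < s)) :
    degZ (a * b) + (t : WithBot ℤ) < d := by
  rw [degZ_mul']
  by_cases ha : a = 0
  · simp [ha, degZ_zero, WithBot.bot_lt_coe]
  by_cases hb : b = 0
  · simp [hb, degZ_zero, WithBot.bot_lt_coe]
  rw [degZ_coe ha, degZ_coe hb] at *
  norm_cast at *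
  omega

/-- Lemma 2.6, kernel pivots: for a `(u,v)`-weak Popov basis
`[K1 K2]` of the left kernel of `[F; G]` with `F` in `t`-weak Popov form,
`u = rdeg_t(F)` and `v ≥ rdeg_t(G)`, all `(u,v)`-pivots lie in `K2`, and `K2`
is in `v`-weak Popov form. -/
theorem kernel_pivots {K : Type*} [Field K] {n m : ℕ}
    (t : Fin n → ℤ) (F : Matrix (Fin n) (Fin n) K[X]) (hF : IsWeakPopov t F)
    (u : Fin n → ℤ) (hu : ∀ i, rdeg t F i = ((u i : ℤ) : WithBot ℤ))
    (G : Matrix (Fin m) (Fin n) K[X]) (v : Fin m → ℤ)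
    (hv : ∀ i, rdeg t G i ≤ ((v i : ℤ) : WithBot ℤ))
    (Kb : Matrix (Fin m) (Fin (n + m)) K[X])
    (hbasis : IsBasisOf Kb (leftKernel
      ((Matrix.fromRows F G).submatrix (⇑(finSumFinEquiv (m := n) (n := m)).symm) id)))
    (hwp : IsWeakPopov (Fin.append u v) Kb) :
    (∀ i (j : Fin (n + m)),
        piv (Fin.append u v) (Kb i) = (j : WithBot (Fin (n + m))) → n ≤ (j : ℕ)) ∧
    IsWeakPopov v (Matrix.of fun i (j : Fin m) => Kb i (Fin.natAdd n j)) := by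
  have hker : ∀ i (j : Fin n), ∑ k : Fin (n + m), Kb i k *
      ((Matrix.fromRows F G).submatrix (⇑(finSumFinEquiv (m := n) (n := m)).symm) id) k j = 0 := by
    intro i j
    have h1 : Kb i ∈ leftKernel
      ((Matrix.fromRows F G).submatrix (⇑(finSumFinEquiv (m := n) (n := m)).symm) id) := by
      rw [← hbasis.2]
      exact Submodule.subset_span ⟨i, rfl⟩
    have h2 := congrFun (LinearMap.mem_ker.mp h1) j
    simpa [Matrix.vecMul, dotProduct] using h2
  have hle : ∀ (k : Fin (n + m)) (j : Fin n),
      degZ (((Matrix.fromRows F G).submatrix (⇑(finSumFinEquiv (m := n) (n := m)).symm) id) k j)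
        + (t j : WithBot ℤ) ≤ (Fin.append u v k : ℤ) := by
    intro k j
    induction k using Fin.addCases with
    | left k =>
      simp only [Matrix.submatrix_apply, finSumFinEquiv_symm_apply_castAdd, id,
        Matrix.fromRows_apply_inl, Fin.append_left]
      rw [← hu k]
      exact Finset.le_sup (f := fun j => degZ (F k j) + (t j : WithBot ℤ)) (Finset.mem_univ j)
    | right k =>
      simp only [Matrix.submatrix_apply, finSumFinEquiv_symm_apply_natAdd, id,
        Matrix.fromRows_apply_inr, Fin.append_right]
      refine le_trans ?_ (hv k)
      exact Finset.le_sup (f := fun j => degZ (G k j) + (t j : WithBot ℤ)) (Finset.mem_univ j)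
  have key : ∀ i (j : Fin (n + m)),
        piv (Fin.append u v) (Kb i) = (j : WithBot (Fin (n + m))) → n ≤ (j : ℕ) := by
    intro i k0 hk0
    obtain ⟨hne, hmax, hgt⟩ := (piv_iff _ _ _).mp hk0
    induction k0 using Fin.addCases with
    | right k => simp
    | left k =>
      exfalso
      obtain ⟨j, hj⟩ := WithBot.ne_bot_iff_exists.mp (hF.1 k)
      obtain ⟨hFne, hFmax, -⟩ := (piv_iff _ _ _).mp hj.symm
      have huk : degZ (F k j) + (t j : WithBot ℤ) = (u k : ℤ) := by
        rw [← hu k]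
        unfold rdeg rdegRow
        exact le_antisymm (Finset.le_sup (f := fun j => degZ (F k j) + (t j : WithBot ℤ))
          (Finset.mem_univ j)) (Finset.sup_le fun l _ => hFmax l)
      have hs := hker i j
      rw [← Finset.add_sum_erase _ _ (Finset.mem_univ (Fin.castAdd m k))] at hs
      obtain ⟨d, hd⟩ : ∃ d : ℤ, degZ (Kb i (Fin.castAdd m k)) +
          ((Fin.append u v (Fin.castAdd m k) : ℤ) : WithBot ℤ) = (d : WithBot ℤ) := by
        rw [degZ_coe hne]
        exact ⟨_, (WithBot.coe_add _ _).symm⟩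
      rw [hd] at hmax hgt
      have hlt := degZ_sum_lt (Finset.univ.erase (Fin.castAdd m k)) (fun l => Kb i l *
        ((Matrix.fromRows F G).submatrix (⇑(finSumFinEquiv (m := n) (n := m)).symm) id) l j)
        (s := (t j : WithBot ℤ)) (c := (d : WithBot ℤ)) (WithBot.bot_lt_coe d) (by
          intro l hl
          have hlk := (Finset.mem_erase.mp hl).1
          apply prod_lt (s := Fin.append u v l)
          rcases lt_or_gt_of_ne hlk with h | h
          · right
            refine ⟨hmax l, ?_⟩
            induction l using Fin.addCases with
            | right l =>
              exfalso
              have h' : n + (l : ℕ) < (k : ℕ) := h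
              have := k.2
              omega
            | left l =>
              have hlk' : l < k := h
              simp only [Matrix.submatrix_apply, finSumFinEquiv_symm_apply_castAdd, id,
                Matrix.fromRows_apply_inl, Fin.append_left]
              obtain ⟨j', hj'⟩ := WithBot.ne_bot_iff_exists.mp (hF.1 l)
              obtain ⟨_, hFmax', hFgt'⟩ := (piv_iff _ _ _).mp hj'.symm
              have hjj : j' < j := by
                have := hF.2 hlk'
                simp only [← hj, ← hj'] at this
                exact WithBot.coe_lt_coe.mp this
              rw [← hu l]
              exact lt_of_lt_of_le (hFgt' j hjj)
                (Finset.le_sup (f := fun j => degZ (F l j) + (t j : WithBot ℤ))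
                  (Finset.mem_univ j'))
          · left
            exact ⟨hgt l h, hle l j⟩)
      have hlt2 : degZ (Kb i (Fin.castAdd m k) * F k j) + (t j : WithBot ℤ) < d := by
        have : Kb i (Fin.castAdd m k) * F k j = - ∑ l ∈ Finset.univ.erase (Fin.castAdd m k), Kb i l *
            ((Matrix.fromRows F G).submatrix
              (⇑(finSumFinEquiv (m := n) (n := m)).symm) id) l j := by
          rw [eq_neg_iff_add_eq_zero]
          simpa using hs
        rw [this]
        exact lt_of_le_of_lt (by gcongr; exact degZ_mono (degree_neg _).le) hlt
      rw [degZ_mul', add_assoc, huk] at hlt2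
      rw [Fin.append_left] at hd
      exact absurd hd hlt2.ne
  have hp : ∀ i, ∃ j : Fin m, piv (Fin.append u v) (Kb i) = (Fin.natAdd n j : Fin (n + m)) ∧
      piv v (fun j : Fin m => Kb i (Fin.natAdd n j)) = (j : WithBot (Fin m)) := by
    intro i
    obtain ⟨k, hk⟩ := WithBot.ne_bot_iff_exists.mp (hwp.1 i)
    have hn := key i k hk.symm
    have hp := (piv_iff _ _ _).mp hk.symm
    induction k using Fin.addCases with
    | left k =>
      have h1 := k.2
      simp at hn
      omega
    | right k =>
      refine ⟨k, hk.symm, (piv_iff _ _ _).mpr ⟨hp.1, fun l => ?_, fun l hl => ?_⟩⟩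
      · simpa using hp.2.1 (Fin.natAdd n l)
      · have := hp.2.2 (Fin.natAdd n l) (by simpa using hl)
        simpa using this
  refine ⟨key, fun i => ?_, fun i i' hi => ?_⟩
  · obtain ⟨j, _, hj⟩ := hp i
    intro h
    exact WithBot.coe_ne_bot (hj.symm.trans h)
  · obtain ⟨j, hj1, hj2⟩ := hp i
    obtain ⟨j', hj1', hj2'⟩ := hp i'
    have h := hwp.2 hi
    simp only [hj1, hj1'] at h
    have h' : j < j' := by simpa using h
    exact lt_of_eq_of_lt hj2 (lt_of_lt_of_eq (WithBot.coe_lt_coe.mpr h') hj2'.symm)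
end
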